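/- (Interpolation for Stable Models, Cautious.) Let P be an extended disjunctive logic program over a finite set of propositional atoms and let φ be a propositional formula such that P |~ φ. Then there is a formula γ ∈ 𝓛(P) ∩ 𝓛(φ) such that P |~ γ and γ ⊨ φ. -/

import Mathlib

namespace NMR

/-- Propositional formulas over a variable type `V`. -/
inductive PropForm (V : Type*) : Type _ where
  | var : V → PropForm V
  | tru : PropForm V
  | fls : PropForm V
  | neg : PropForm V → PropForm V
  | conj : PropForm V → PropForm V → PropForm V
  | disj : PropForm V → PropForm V → PropForm V
  | impl : PropForm V → PropForm V → PropForm V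

variable {V : Type*}

/-- Truth value of a formula under a valuation. -/
def PropForm.eval (ν : V → Bool) : PropForm V → Bool
  | .var v => ν v
  | .tru => true
  | .fls => false
  | .neg φ => !(φ.eval ν)
  | .conj φ ψ => φ.eval ν && ψ.eval ν
  | .disj φ ψ => φ.eval ν || ψ.eval ν
  | .impl φ ψ => !(φ.eval ν) || ψ.eval ν

/-- The set of variables occurring in a formula. -/
def PropForm.vars : PropForm V → Set V
  | .var v => {v}
  | .tru => ∅
  | .fls => ∅
  | .neg φ => φ.vars
  | .conj φ ψ => φ.vars ∪ ψ.vars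
  | .disj φ ψ => φ.vars ∪ ψ.vars
  | .impl φ ψ => φ.vars ∪ ψ.vars

/-- `ν ⊨ φ`. -/
def Sat (ν : V → Bool) (φ : PropForm V) : Prop := φ.eval ν = true

/-- `ν ⊨ T` for a set of formulas. -/
def SatSet (ν : V → Bool) (T : Set (PropForm V)) : Prop := ∀ φ ∈ T, Sat ν φ

/-- `T ⊨ φ`. -/
def Entails (T : Set (PropForm V)) (φ : PropForm V) : Prop :=
  ∀ ν : V → Bool, SatSet ν T → Sat ν φ

/-- `T ⊨ Γ` for a set `Γ`. -/
def EntailsSet (T Γ : Set (PropForm V)) : Prop := ∀ φ ∈ Γ, Entails T φ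

/-- A tautology is satisfied by every valuation. -/
def Tautology (φ : PropForm V) : Prop := ∀ ν : V → Bool, Sat ν φ

/-- `L(T)`: the set of variables occurring in a set of formulas. -/
def varsOf (T : Set (PropForm V)) : Set V := ⋃ φ ∈ T, φ.vars

/-- `𝓛(S)`: the set of formulas all of whose variables lie in `S`. -/
def FormsOver (S : Set V) : Set (PropForm V) := {φ | φ.vars ⊆ S}

/-- `Cn^S(T)`: the formulas in `𝓛(S)` entailed by `T`. -/
def Cn (S : Set V) (T : Set (PropForm V)) : Set (PropForm V) :=
  {φ | φ.vars ⊆ S ∧ Entails T φ}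

/-- Two sets of formulas are logically equivalent iff they have the same models. -/
def EquivTheories (T T' : Set (PropForm V)) : Prop :=
  ∀ ν : V → Bool, SatSet ν T ↔ SatSet ν T'

/-- A literal: an atom or its classical negation. -/
inductive Lit (A : Type*) where
  | pos : A → Lit A
  | neg : A → Lit A

variable {A : Type*}

/-- The atom of a literal. -/
def Lit.atom : Lit A → A
  | .pos a => a
  | .neg a => a

/-- A rule of an extended disjunctive logic program:
`head ← posb, not negb` where all entries are literals. -/
structure Rule (A : Type*) where
  head : Set (Lit A)
  posb : Set (Lit A)
  negb : Set (Lit A)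

/-- `X` is closed under (the rules of) a positive program `P`. -/
def ClosedUnder (P : Set (Rule A)) (X : Set (Lit A)) : Prop :=
  ∀ r ∈ P, r.posb ⊆ X → (r.head ∩ X).Nonempty

/-- `X` is logically closed: consistent or contains all literals. -/
def LogClosed (X : Set (Lit A)) : Prop :=
  (¬ ∃ a : A, Lit.pos a ∈ X ∧ Lit.neg a ∈ X) ∨ X = Set.univ

/-- `X` is an answer set of a positive program `P`: a minimal set of literals
that is closed under `P` and logically closed. -/
def AnswerSetPos (P : Set (Rule A)) (X : Set (Lit A)) : Prop :=
  ClosedUnder P X ∧ LogClosed X ∧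
    ∀ Y : Set (Lit A), Y ⊆ X → ClosedUnder P Y → LogClosed Y → Y = X

/-- The reduct `P^X`. -/
def Reduct (P : Set (Rule A)) (X : Set (Lit A)) : Set (Rule A) :=
  {r' | r'.negb = ∅ ∧ ∃ r ∈ P, r'.head = r.head ∧ r'.posb = r.posb ∧ r.negb ∩ X = ∅}

/-- `X` is an answer set of `P` iff `X` is an answer set of `P^X`. -/
def IsAnswerSet (P : Set (Rule A)) (X : Set (Lit A)) : Prop :=
  AnswerSetPos (Reduct P X) X

/-- Truth of a literal under a valuation. -/
def litSat (ν : A → Bool) : Lit A → Prop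
  | .pos a => ν a = true
  | .neg a => ν a = false

/-- `X ⊨ φ`: `φ` is a propositional consequence of `X`, literals read as formulas. -/
def XEntails (X : Set (Lit A)) (φ : PropForm A) : Prop :=
  ∀ ν : A → Bool, (∀ l ∈ X, litSat ν l) → Sat ν φ

/-- Cautious entailment `P |~ φ`. -/
def LPCautious (P : Set (Rule A)) (φ : PropForm A) : Prop :=
  ∀ X : Set (Lit A), IsAnswerSet P X → XEntails X φ

/-- Brave entailment `P |~^b φ`. -/
def LPBrave (P : Set (Rule A)) (φ : PropForm A) : Prop :=
  ∃ X : Set (Lit A), IsAnswerSet P X ∧ XEntails X φ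

/-- `L(P)`: the atoms occurring in a program. -/
def atomsOf (P : Set (Rule A)) : Set A :=
  ⋃ r ∈ P, (Lit.atom '' r.head ∪ Lit.atom '' r.posb ∪ Lit.atom '' r.negb)

theorem PropForm.eval_congr' (φ : PropForm A) (ν μ : A → Bool)
    (h : ∀ a ∈ φ.vars, ν a = μ a) : φ.eval ν = φ.eval μ := by
  induction φ with
  | var v => exact h v rfl
  | tru => rfl
  | fls => rfl
  | neg φ ih => simp only [PropForm.eval, ih h]
  | conj φ ψ ih1 ih2 =>
    simp only [PropForm.eval, ih1 fun a ha => h a (Or.inl ha), ih2 fun a ha => h a (Or.inr ha)]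
  | disj φ ψ ih1 ih2 =>
    simp only [PropForm.eval, ih1 fun a ha => h a (Or.inl ha), ih2 fun a ha => h a (Or.inr ha)]
  | impl φ ψ ih1 ih2 =>
    simp only [PropForm.eval, ih1 fun a ha => h a (Or.inl ha), ih2 fun a ha => h a (Or.inr ha)]

/-- Functional completeness relative to a finite set of atoms. -/
theorem exists_form {S : Set A} (hS : S.Finite) : ∀ M : (A → Bool) → Prop,
    (∀ ν μ : A → Bool, (∀ a ∈ S, ν a = μ a) → M ν → M μ) →
    ∃ γ : PropForm A, γ.vars ⊆ S ∧ ∀ ν, Sat ν γ ↔ M ν := by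
  classical
  induction S, hS using Set.Finite.induction_on with
  | empty =>
    intro M hM
    by_cases h : ∃ ν, M ν
    · obtain ⟨μ, hμ⟩ := h
      exact ⟨.tru, by simp [PropForm.vars], fun ν => by
        simpa [Sat, PropForm.eval] using hM μ ν (by simp) hμ⟩
    · exact ⟨.fls, by simp [PropForm.vars], fun ν => by
        simpa [Sat, PropForm.eval] using fun hν => h ⟨ν, hν⟩⟩
  | @insert a S _ _ ih =>
    intro M hM
    have key : ∀ b : Bool, ∃ γ : PropForm A, γ.vars ⊆ S ∧
        ∀ ν, Sat ν γ ↔ M (Function.update ν a b) := by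
      intro b
      apply ih (fun ν => M (Function.update ν a b))
      intro ν μ hνμ
      apply hM
      intro c hc
      by_cases hca : c = a
      · subst hca; simp
      · simp only [Function.update_of_ne hca]
        exact hνμ c (hc.resolve_left hca)
    obtain ⟨γ1, hv1, h1⟩ := key true
    obtain ⟨γ0, hv0, h0⟩ := key false
    refine ⟨.disj (.conj (.var a) γ1) (.conj (.neg (.var a)) γ0), ?_, ?_⟩
    · intro c hc
      simp only [PropForm.vars, Set.mem_union, Set.mem_singleton_iff] at hc
      rcases hc with (hc | hc) | (hc | hc)
      · exact Or.inl hc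
      · exact Or.inr (hv1 hc)
      · exact Or.inl hc
      · exact Or.inr (hv0 hc)
    · intro ν
      have e : Function.update ν a (ν a) = ν := Function.update_eq_self a ν
      have h1 := h1 ν
      have h0 := h0 ν
      cases hb : ν a <;> rw [hb] at e <;> rw [e] at * <;>
        simp_all [Sat, PropForm.eval]

/-- A satisfiable answer set only has literals over the atoms of the program. -/
theorem answerSet_atoms {P : Set (Rule A)} {X : Set (Lit A)} (hX : IsAnswerSet P X)
    {ν : A → Bool} (hν : ∀ l ∈ X, litSat ν l) : ∀ l ∈ X, l.atom ∈ atomsOf P := by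
  obtain ⟨hc, -, hm⟩ := hX
  have hY := hm {l | l ∈ X ∧ l.atom ∈ atomsOf P} (fun l hl => hl.1) ?_ ?_
  · intro l hl
    rw [← hY] at hl
    exact hl.2
  · intro r' hr' hp
    obtain ⟨l, hl, hlX⟩ := hc r' hr' (fun l hl => (hp hl).1)
    obtain ⟨_, r, hr, hh, _, _⟩ := hr'
    refine ⟨l, hl, hlX, ?_⟩
    rw [hh] at hl
    exact Set.mem_biUnion hr (Or.inl (Or.inl ⟨l, hl, rfl⟩))
  · left
    rintro ⟨a, h1, h2⟩
    have e1 : ν a = true := hν _ h1.1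
    have e2 : ν a = false := hν _ h2.1
    simp [e1] at e2

/-- Interpolation for Stable Models, Cautious. -/
theorem interpolation_stable_cautious {A : Type*} [Finite A]
    (P : Set (Rule A)) (φ : PropForm A) (h : LPCautious P φ) :
    ∃ γ : PropForm A,
      γ.vars ⊆ atomsOf P ∩ φ.vars ∧
      LPCautious P γ ∧
      Entails {γ} φ := by
  classical
  obtain ⟨γ, hv, hγ⟩ := exists_form (Set.toFinite (atomsOf P ∩ φ.vars))
    (fun ν => ∃ ν' : A → Bool, (∀ a ∈ atomsOf P ∩ φ.vars, ν' a = ν a) ∧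
      ∃ X, IsAnswerSet P X ∧ ∀ l ∈ X, litSat ν' l) (by
    rintro ν μ hνμ ⟨ν', h1, h2⟩
    exact ⟨ν', fun a ha => (h1 a ha).trans (hνμ a ha), h2⟩)
  refine ⟨γ, hv, ?_, ?_⟩
  · intro X hX ν hν
    exact (hγ ν).2 ⟨ν, fun _ _ => rfl, X, hX, hν⟩
  · intro ν hν
    obtain ⟨ν', h1, X, hX, hs⟩ := (hγ ν).1 (hν γ rfl)
    have hat := answerSet_atoms hX hs
    have hμ : Sat (fun a => if a ∈ atomsOf P then ν' a else ν a) φ := by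
      apply h X hX
      intro l hl
      have h2 := hat l hl
      have h3 := hs l hl
      cases l <;> simp_all [litSat, Lit.atom]
    unfold Sat at hμ ⊢
    rw [← hμ]
    apply PropForm.eval_congr'
    intro a ha
    by_cases hP : a ∈ atomsOf P
    · simp [hP, h1 a ⟨hP, ha⟩]
    · simp [hP]

end NMR
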